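/- Let σ ∈ ℝ with σ ≠ 0 and define 𝒴 : ℝ × (ℝ \ {0}) × ℝ → ℝ by 𝒴(x,y,z) := −z/(σ y). Then for every h ∈ ℝ and every (x,y,z) with y ≠ 0, the function 𝒴 satisfies the partial differential equation (1/2)σ² 𝒴_xx + (1/2)z² 𝒴_yy + (1/2)h² 𝒴_zz + σ z 𝒴_xy + h z 𝒴_yz + σ h 𝒴_xz − σ² 𝒴 𝒴_x − σ z 𝒴 𝒴_y − σ h 𝒴 𝒴_z = 0, where subscripts denote partial derivatives with respect to the indicated variables x, y, z. -/

import Mathlib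

open Set

/-- The rational function `𝒴(x,y,z) = -z/(σ y)` satisfies, for every
`h ∈ ℝ` and every point with `y ≠ 0`, the PDE
`(1/2)σ²𝒴_xx + (1/2)z²𝒴_yy + (1/2)h²𝒴_zz + σz𝒴_xy + hz𝒴_yz + σh𝒴_xz
  - σ²𝒴𝒴_x - σz𝒴𝒴_y - σh𝒴𝒴_z = 0`.
This `𝒴` is the point transformation corresponding to the Cole–Hopf transformation. -/
theorem point_transformation_pde_cole_hopf
    (σ : ℝ) (hσ : σ ≠ 0) :
    ∀ (h x y z : ℝ), y ≠ 0 →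
      (fun (𝒴 : ℝ → ℝ → ℝ → ℝ) =>
        (1 / 2) * σ ^ 2 * deriv (fun a => deriv (fun b => 𝒴 b y z) a) x
          + (1 / 2) * z ^ 2 * deriv (fun a => deriv (fun b => 𝒴 x b z) a) y
          + (1 / 2) * h ^ 2 * deriv (fun a => deriv (fun b => 𝒴 x y b) a) z
          + σ * z * deriv (fun b => deriv (fun a => 𝒴 a b z) x) y
          + h * z * deriv (fun b => deriv (fun a => 𝒴 x a b) y) z
          + σ * h * deriv (fun b => deriv (fun a => 𝒴 a y b) x) z
          - σ ^ 2 * 𝒴 x y z * deriv (fun a => 𝒴 a y z) x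
          - σ * z * 𝒴 x y z * deriv (fun a => 𝒴 x a z) y
          - σ * h * 𝒴 x y z * deriv (fun a => 𝒴 x y a) z
          = 0)
        (fun x y z => -z / (σ * y)) := by
  intro h x y z hy
  have e : ∀ c a : ℝ, deriv (fun b => -c / (σ * b)) a = (c / σ) * (a ^ 2)⁻¹ := by
    intro c a
    have : (fun b : ℝ => -c / (σ * b)) = fun b => (-c / σ) * b⁻¹ := by
      funext b
      rw [div_mul_eq_div_div, div_eq_mul_inv (-c / σ) b]
    rw [this, deriv_const_mul_field, deriv_inv]
    ring
  have e2 : deriv (fun a : ℝ => (z / σ) * (a ^ 2)⁻¹) y = (z / σ) * (-2 / y ^ 3) := by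
    have h1 : HasDerivAt (fun a : ℝ => (a ^ 2)⁻¹) (-2 / y ^ 3) y := by
      have h2 := (hasDerivAt_pow 2 y).fun_inv (pow_ne_zero 2 hy)
      have h3 : -2 / y ^ 3 = -(((2 : ℕ) : ℝ) * y ^ (2 - 1)) / (y ^ 2) ^ 2 := by
        norm_num
        field_simp
      rw [h3]
      exact h2
    exact (h1.const_mul (z / σ)).deriv
  have e3 : ∀ a : ℝ, deriv (fun b : ℝ => -b / (σ * y)) a = -1 / (σ * y) := by
    intro a
    exact ((hasDerivAt_id a).neg.div_const (σ * y)).deriv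
  have e4 : deriv (fun b : ℝ => (b / σ) * (y ^ 2)⁻¹) z = (1 / σ) * (y ^ 2)⁻¹ :=
    (((hasDerivAt_id z).div_const σ).mul_const _).deriv
  simp only [e, e2, e3, e4, deriv_const]
  field_simp
  ring
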